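/- arXiv:1411.0289 — 12 statements merged into one kernel-verified Lean document; each statement's English description precedes it below -/
import Mathlib

section
/- Let α, β, γ, δ be real numbers and set σ = (α+β+γ+δ)/2, ᾱ = σ−α, β̄ = σ−β, γ̄ = σ−γ, δ̄ = σ−δ. Then the following identities hold: (i) ᾱ + β̄ = γ + δ; (ii) sin ᾱ · sin β̄ − sin α · sin β = sin σ · sin(σ−α−β) = sin γ · sin δ − sin γ̄ · sin δ̄; (iii) sin α · sin β − sin γ̄ · sin δ̄ = sin(σ−α−γ) · sin(σ−β−γ) = sin ᾱ · sin β̄ − sin γ · sin δ; (iv) sin σ · sin(σ−α−β) · sin(σ−β−γ) · sin(σ−α−γ) = sin α · sin β · sin γ · sin δ − sin ᾱ · sin β̄ · sin γ̄ · sin δ̄. -/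
open Real

/-! Each product of two sines in the second and third lines is half a difference of cosines of
`α ± β` and `γ ± δ`, so both lines follow by comparing these. Writing `a = sin α sin β`,
`b = sin αb sin βb`, `c = sin γ sin δ`, `d = sin γb sin δb`, those lines give
`b - a = c - d` and `a - d = b - c`, and the last line is then the polynomial identity
`(b - a) * (a - d) = a * c - b * d`. -/

/-- Product-to-sum formula, with the difference and sum of the angles as separate parameters. -/
lemma sin_mul_sin_of_eq {x y u v : ℝ} (hu : x - y = u) (hv : x + y = v) :
    sin x * sin y = (cos u - cos v) / 2 := by
  rw [← hu, ← hv, cos_sub, cos_add]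
  ring

theorem bar_relations (α β γ δ σ αb βb γb δb : ℝ)
    (hσ : σ = (α + β + γ + δ) / 2)
    (hα : αb = σ - α) (hβ : βb = σ - β) (hγ : γb = σ - γ) (hδ : δb = σ - δ) :
    αb + βb = γ + δ ∧
    (sin αb * sin βb - sin α * sin β = sin σ * sin (σ - α - β) ∧
      sin σ * sin (σ - α - β) = sin γ * sin δ - sin γb * sin δb) ∧
    (sin α * sin β - sin γb * sin δb = sin (σ - α - γ) * sin (σ - β - γ) ∧
      sin (σ - α - γ) * sin (σ - β - γ) = sin αb * sin βb - sin γ * sin δ) ∧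
    sin σ * sin (σ - α - β) * sin (σ - β - γ) * sin (σ - α - γ) =
      sin α * sin β * sin γ * sin δ - sin αb * sin βb * sin γb * sin δb := by
  have ha : sin α * sin β = (cos (α - β) - cos (α + β)) / 2 := sin_mul_sin_of_eq rfl rfl
  have hc : sin γ * sin δ = (cos (γ - δ) - cos (γ + δ)) / 2 := sin_mul_sin_of_eq rfl rfl
  have hb : sin αb * sin βb = (cos (α - β) - cos (γ + δ)) / 2 := by
    rw [mul_comm]
    exact sin_mul_sin_of_eq (by linarith) (by linarith)
  have hd : sin γb * sin δb = (cos (γ - δ) - cos (α + β)) / 2 := by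
    rw [mul_comm]
    exact sin_mul_sin_of_eq (by linarith) (by linarith)
  have hP : sin σ * sin (σ - α - β) = (cos (α + β) - cos (γ + δ)) / 2 :=
    sin_mul_sin_of_eq (by linarith) (by linarith)
  have hQ : sin (σ - α - γ) * sin (σ - β - γ) = (cos (α - β) - cos (γ - δ)) / 2 := by
    rw [← cos_neg (α - β), ← cos_neg (γ - δ)]
    exact sin_mul_sin_of_eq (by linarith) (by linarith)
  refine ⟨by linarith, ⟨by linarith, by linarith⟩, ⟨by linarith, by linarith⟩, ?_⟩
  calc sin σ * sin (σ - α - β) * sin (σ - β - γ) * sin (σ - α - γ)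
      = (sin σ * sin (σ - α - β)) * (sin (σ - α - γ) * sin (σ - β - γ)) := by ring
    _ = (sin α * sin β) * (sin γ * sin δ) - (sin αb * sin βb) * (sin γb * sin δb) := by
        rw [ha, hb, hc, hd, hP, hQ]
        ring
    _ = sin α * sin β * sin γ * sin δ - sin αb * sin βb * sin γb * sin δb := by ring
end

section
/- Let α, β, γ, δ be real numbers such that for every choice of signs ε₁, ε₂, ε₃ ∈ {−1, +1} the number α + ε₁β + ε₂γ + ε₃δ is not an integer multiple of 2π. Then sin α · sin β · sin γ · sin δ ≠ sin ᾱ · sin β̄ · sin γ̄ · sin δ̄, where σ = (α+β+γ+δ)/2, ᾱ = σ−α, β̄ = σ−β, γ̄ = σ−γ, δ̄ = σ−δ. Equivalently, for a spherical quadrilateral of elliptic type the modulus M = (sin α sin β sin γ sin δ)/(sin ᾱ sin β̄ sin γ̄ sin δ̄) is different from 1. -/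
open Real

/-!
The difference of the two products factors as
`sin σ * sin (σ - α - β) * sin (σ - β - γ) * sin (σ - α - γ)`
(`sin_prod_sub_sin_prod`). If the products were equal, one factor would vanish, so its argument
would be an integer multiple of `π`; twice each argument is, up to sign, of the form
`α ± β ± γ ± δ`, which the elliptic condition forbids from being in `2πℤ`.
-/

lemma sin_mul_sin_eq_half (x y : ℝ) : sin x * sin y = (cos (x - y) - cos (x + y)) / 2 := by
  rw [cos_sub, cos_add]; ring

/-- By product-to-sum, with `A, B = cos (α ∓ β)` and `C, D = cos (γ ∓ δ)`, this is the polynomial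
identity `(B - D) * (A - C) = (A - B) * (C - D) - (A - D) * (C - B)`. -/
lemma sin_prod_sub_sin_prod (α β γ δ σ : ℝ) (hσ : σ = (α + β + γ + δ) / 2) :
    sin σ * sin (σ - α - β) * (sin (σ - β - γ) * sin (σ - α - γ)) =
      sin α * sin β * (sin γ * sin δ) -
        sin (σ - α) * sin (σ - β) * (sin (σ - γ) * sin (σ - δ)) := by
  have h1 : sin σ * sin (σ - α - β) = (cos (α + β) - cos (γ + δ)) / 2 := by
    rw [sin_mul_sin_eq_half, hσ]; ring_nf
  have h2 : sin (σ - β - γ) * sin (σ - α - γ) = (cos (α - β) - cos (γ - δ)) / 2 := by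
    rw [sin_mul_sin_eq_half, hσ, ← cos_neg (γ - δ)]; ring_nf
  have h3 : sin (σ - α) * sin (σ - β) = (cos (α - β) - cos (γ + δ)) / 2 := by
    rw [sin_mul_sin_eq_half, hσ, ← cos_neg (α - β)]; ring_nf
  have h4 : sin (σ - γ) * sin (σ - δ) = (cos (γ - δ) - cos (α + β)) / 2 := by
    rw [sin_mul_sin_eq_half, hσ, ← cos_neg (γ - δ)]; ring_nf
  rw [h1, h2, h3, h4, sin_mul_sin_eq_half α β, sin_mul_sin_eq_half γ δ]
  ring

theorem elliptic_modulus_ne_one (α β γ δ σ αb βb γb δb : ℝ)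
    (hσ : σ = (α + β + γ + δ) / 2)
    (hα : αb = σ - α) (hβ : βb = σ - β) (hγ : γb = σ - γ) (hδ : δb = σ - δ)
    (h : ∀ ε₁ ε₂ ε₃ : ℝ, (ε₁ = 1 ∨ ε₁ = -1) → (ε₂ = 1 ∨ ε₂ = -1) → (ε₃ = 1 ∨ ε₃ = -1) →
      ∀ n : ℤ, α + ε₁ * β + ε₂ * γ + ε₃ * δ ≠ n * (2 * π)) :
    sin α * sin β * sin γ * sin δ ≠ sin αb * sin βb * sin γb * sin δb := by
  intro heq
  subst hα hβ hγ hδ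
  have key := sin_prod_sub_sin_prod α β γ δ σ hσ
  have h0 : sin σ * sin (σ - α - β) * (sin (σ - β - γ) * sin (σ - α - γ)) = 0 := by
    rw [key]; linarith
  rcases mul_eq_zero.mp h0 with h0 | h0 <;> rcases mul_eq_zero.mp h0 with h0 | h0 <;>
    obtain ⟨n, hn⟩ := sin_eq_zero_iff.mp h0
  · exact h 1 1 1 (by simp) (by simp) (by simp) n (by linarith)
  · exact h 1 (-1) (-1) (by simp) (by simp) (by simp) (-n) (by push_cast; linarith)
  · exact h (-1) (-1) 1 (by simp) (by simp) (by simp) n (by linarith)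
  · exact h (-1) 1 (-1) (by simp) (by simp) (by simp) (-n) (by push_cast; linarith)
end

section
/- Let α, β, γ, δ be real numbers with 0 < α, β, γ, δ < π satisfying α < β+γ+δ < α+2π, β < α+γ+δ < β+2π, γ < α+β+δ < γ+2π, and δ < α+β+γ < δ+2π. Then the closed intervals [|α−β|, min(α+β, 2π−α−β)] and [|γ−δ|, min(γ+δ, 2π−γ−δ)] have nonempty intersection. -/
open Real

theorem intervals_intersect (α β γ δ : ℝ)
    (hα : 0 < α) (hα' : α < π) (hβ : 0 < β) (hβ' : β < π)
    (hγ : 0 < γ) (hγ' : γ < π) (hδ : 0 < δ) (hδ' : δ < π)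
    (h1 : α < β + γ + δ) (h1' : β + γ + δ < α + 2 * π)
    (h2 : β < α + γ + δ) (h2' : α + γ + δ < β + 2 * π)
    (h3 : γ < α + β + δ) (h3' : α + β + δ < γ + 2 * π)
    (h4 : δ < α + β + γ) (h4' : α + β + γ < δ + 2 * π) :
    (Set.Icc |α - β| (min (α + β) (2 * π - α - β)) ∩
      Set.Icc |γ - δ| (min (γ + δ) (2 * π - γ - δ))).Nonempty := by
  -- Two closed intervals meet iff each lower endpoint is at most each upper endpoint,
  -- and then the larger of the lower endpoints is a common point.
  rw [Set.Icc_inter_Icc, Set.nonempty_Icc]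
  refine sup_le (le_inf (le_min ?_ ?_) (le_min ?_ ?_)) (le_inf (le_min ?_ ?_) (le_min ?_ ?_)) <;>
    rw [abs_le] <;> constructor <;> linarith
end

section
/- Let α, β, γ, δ be real numbers with 0 < α, β, γ, δ < π satisfying α < β+γ+δ < α+2π, β < α+γ+δ < β+2π, γ < α+β+δ < γ+2π, and δ < α+β+γ < δ+2π. Then there exist unit vectors v₁, v₂, v₃, v₄ in three-dimensional Euclidean space ℝ³ such that ⟨v₁,v₂⟩ = cos α, ⟨v₂,v₃⟩ = cos β, ⟨v₃,v₄⟩ = cos γ, and ⟨v₄,v₁⟩ = cos δ. -/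
/-!
Cut the quadrilateral along the diagonal `v₁v₃`. For an angle `x`, a spherical triangle with sides
`a, b, x` exists as soon as `|a - b| ≤ x ≤ min (a + b) (2π - a - b)`
(`exists_apex_of_triangle_ineq`). The choice `x = max |α - β| |δ - γ|` satisfies these inequalities
for both `(α, β)` and `(δ, γ)`, by the hypotheses on the four sides, so the two triangles over the
common side `v₁v₃` of length `x` exist and together form the quadrilateral.
-/

open Real
open scoped RealInnerProductSpace

/-- The third vertex `(p, q, r)` of a spherical triangle with base from `(1, 0, 0)` to
`(cos x, sin x, 0)` and sides `a, b`. The base may be degenerate (`x = 0`), but `x < π`. -/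
lemma exists_apex_of_triangle_ineq (a b x : ℝ) (hb : 0 ≤ b) (hbπ : b ≤ π)
    (hx : 0 ≤ x) (hxπ : x < π) (h1 : a - b ≤ x) (h2 : b - a ≤ x) (h3 : x ≤ a + b)
    (h4 : x + a + b ≤ 2 * π) :
    ∃ p q r : ℝ, p ^ 2 + q ^ 2 + r ^ 2 = 1 ∧ p = cos a ∧ p * cos x + q * sin x = cos b := by
  rcases hx.eq_or_lt with rfl | hx0
  · obtain rfl : a = b := by linarith
    exact ⟨cos a, sin a, 0, by nlinarith [sin_sq_add_cos_sq a], rfl, by simp⟩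
  · have hs : 0 < sin x := sin_pos_of_pos_of_lt_pi hx0 hxπ
    have hupper : cos b ≤ cos (a - x) := by
      rw [← cos_abs (a - x)]
      exact cos_le_cos_of_nonneg_of_le_pi (abs_nonneg _) hbπ
        (abs_le.2 ⟨by linarith, by linarith⟩)
    have hlower : cos (a + x) ≤ cos b := by
      rcases le_total (a + x) π with h | h
      · exact cos_le_cos_of_nonneg_of_le_pi hb h (by linarith)
      · rw [← cos_two_pi_sub (a + x)]
        exact cos_le_cos_of_nonneg_of_le_pi hb (by linarith) (by linarith)
    rw [cos_sub] at hupper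
    rw [cos_add] at hlower
    set q := (cos b - cos a * cos x) / sin x with hq
    have hqs : q * sin x = cos b - cos a * cos x := div_mul_cancel₀ _ (ne_of_gt hs)
    -- The two cosine bounds say `|q| ≤ sin a`, so `(cos a, q)` lies in the unit disc.
    have hq1 : q ≤ sin a := le_of_mul_le_mul_right (by linarith) hs
    have hq2 : -sin a ≤ q := le_of_mul_le_mul_right (by linarith) hs
    have hnn : 0 ≤ 1 - cos a ^ 2 - q ^ 2 := by nlinarith [sin_sq_add_cos_sq a]
    refine ⟨cos a, q, √(1 - cos a ^ 2 - q ^ 2), ?_, rfl, by linarith⟩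
    rw [sq_sqrt hnn]
    ring

theorem spherical_quadrilateral_exists (α β γ δ : ℝ)
    (hα : 0 < α) (hα' : α < π) (hβ : 0 < β) (hβ' : β < π)
    (hγ : 0 < γ) (hγ' : γ < π) (hδ : 0 < δ) (hδ' : δ < π)
    (h1 : α < β + γ + δ) (h1' : β + γ + δ < α + 2 * π)
    (h2 : β < α + γ + δ) (h2' : α + γ + δ < β + 2 * π)
    (h3 : γ < α + β + δ) (h3' : α + β + δ < γ + 2 * π)
    (h4 : δ < α + β + γ) (h4' : α + β + γ < δ + 2 * π) :
    ∃ v₁ v₂ v₃ v₄ : EuclideanSpace ℝ (Fin 3),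
      ‖v₁‖ = 1 ∧ ‖v₂‖ = 1 ∧ ‖v₃‖ = 1 ∧ ‖v₄‖ = 1 ∧
      ⟪v₁, v₂⟫ = Real.cos α ∧ ⟪v₂, v₃⟫ = Real.cos β ∧
      ⟪v₃, v₄⟫ = Real.cos γ ∧ ⟪v₄, v₁⟫ = Real.cos δ := by
  obtain ⟨x, hx, hxπ, a1, a2, a3, a4, b1, b2, b3, b4⟩ : ∃ x : ℝ, 0 ≤ x ∧ x < π ∧
      α - β ≤ x ∧ β - α ≤ x ∧ x ≤ α + β ∧ x + α + β ≤ 2 * π ∧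
      δ - γ ≤ x ∧ γ - δ ≤ x ∧ x ≤ δ + γ ∧ x + δ + γ ≤ 2 * π := by
    refine ⟨max |α - β| |δ - γ|, ?_⟩
    rcases max_cases |α - β| |δ - γ| with h | h <;>
    rcases abs_cases (α - β) with hA | hA <;>
    rcases abs_cases (δ - γ) with hB | hB <;>
    refine ⟨?_, ?_, ?_, ?_, ?_, ?_, ?_, ?_, ?_, ?_⟩ <;> linarith
  obtain ⟨p, q, r, hn, hp, hpq⟩ :=
    exists_apex_of_triangle_ineq α β x hβ.le hβ'.le hx hxπ a1 a2 a3 a4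
  obtain ⟨p', q', r', hn', hp', hpq'⟩ :=
    exists_apex_of_triangle_ineq δ γ x hγ.le hγ'.le hx hxπ b1 b2 b3 b4
  refine ⟨!₂[1, 0, 0], !₂[p, q, r], !₂[cos x, sin x, 0], !₂[p', q', r'], ?_⟩
  simp only [EuclideanSpace.norm_eq, PiLp.inner_apply, Fin.sum_univ_three, sqrt_eq_one]
  simp only [norm_eq_abs, sq_abs]
  simp
  refine ⟨hn, hn', hp, ?_, ?_, hp'⟩ <;> linarith
end

section
/- For real numbers α, β, γ, δ define the coefficients c₂₂(α,β,γ,δ) = sin((α+β+γ−δ)/2)·sin((α−β+γ−δ)/2), c₂₀(α,β,γ,δ) = sin((α−β−γ−δ)/2)·sin((α+β−γ−δ)/2), c₀₂(α,β,γ,δ) = sin((α+β−γ+δ)/2)·sin((α−β−γ+δ)/2), c₁₁(α,β,γ,δ) = −sin α · sin γ, c₀₀(α,β,γ,δ) = sin((α−β+γ+δ)/2)·sin((α+β+γ+δ)/2). Let z, w be complex numbers with z ≠ 0. Then c₂₂ z²w² + c₂₀ z² + c₀₂ w² + 2c₁₁ zw + c₀₀ = 0 (coefficients taken at (α,β,γ,δ))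 holds if and only if c₂₂' z'²w² + c₂₀' z'² + c₀₂' w² + 2c₁₁' z'w + c₀₀' = 0 holds, where z' = −1/z and the primed coefficients are taken at (π−α, π−β, γ, δ). -/
/-!
Replacing `(α, β)` by `(π - α, π - β)` turns each half-sum `(α + β ± …)/2` into `π` minus a half-sum
and each half-difference `(α - β ± …)/2` into the negative of one. Hence it exchanges `c22` with
`-c02` and `c20` with `-c00`, and fixes `c11`, so the primed polynomial at `(-z⁻¹, w)`
is `-z⁻²` times the original polynomial at `(z, w)`.
-/

open Real

noncomputable def c22 (α β γ δ : ℝ) : ℝ := sin ((α + β + γ - δ) / 2) * sin ((α - β + γ - δ) / 2)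
noncomputable def c20 (α β γ δ : ℝ) : ℝ := sin ((α - β - γ - δ) / 2) * sin ((α + β - γ - δ) / 2)
noncomputable def c02 (α β γ δ : ℝ) : ℝ := sin ((α + β - γ + δ) / 2) * sin ((α - β - γ + δ) / 2)
noncomputable def c11 (α β γ δ : ℝ) : ℝ := -(sin α * sin γ)
noncomputable def c00 (α β γ δ : ℝ) : ℝ := sin ((α - β + γ + δ) / 2) * sin ((α + β + γ + δ) / 2)

theorem c22_switch (α β γ δ : ℝ) : c22 (π - α) (π - β) γ δ = -c02 α β γ δ := by
  have h₁ : (π - α + (π - β) + γ - δ) / 2 = π - (α + β - γ + δ) / 2 := by ring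
  have h₂ : (π - α - (π - β) + γ - δ) / 2 = -((α - β - γ + δ) / 2) := by ring
  rw [c22, c02, h₁, h₂, sin_pi_sub, sin_neg]
  ring

theorem c20_switch (α β γ δ : ℝ) : c20 (π - α) (π - β) γ δ = -c00 α β γ δ := by
  have h₁ : (π - α + (π - β) - γ - δ) / 2 = π - (α + β + γ + δ) / 2 := by ring
  have h₂ : (π - α - (π - β) - γ - δ) / 2 = -((α - β + γ + δ) / 2) := by ring
  rw [c20, c00, h₁, h₂, sin_pi_sub, sin_neg]
  ring

theorem c02_switch (α β γ δ : ℝ) : c02 (π - α) (π - β) γ δ = -c22 α β γ δ := by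
  have h₁ : (π - α + (π - β) - γ + δ) / 2 = π - (α + β + γ - δ) / 2 := by ring
  have h₂ : (π - α - (π - β) - γ + δ) / 2 = -((α - β + γ - δ) / 2) := by ring
  rw [c02, c22, h₁, h₂, sin_pi_sub, sin_neg]
  ring

theorem c00_switch (α β γ δ : ℝ) : c00 (π - α) (π - β) γ δ = -c20 α β γ δ := by
  have h₁ : (π - α + (π - β) + γ + δ) / 2 = π - (α + β - γ - δ) / 2 := by ring
  have h₂ : (π - α - (π - β) + γ + δ) / 2 = -((α - β - γ - δ) / 2) := by ring
  rw [c00, c20, h₁, h₂, sin_pi_sub, sin_neg]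
  ring

theorem c11_switch (α β γ δ : ℝ) : c11 (π - α) (π - β) γ δ = c11 α β γ δ := by
  rw [c11, c11, sin_pi_sub]

theorem switching_isomorphism (α β γ δ : ℝ) (z w : ℂ) (hz : z ≠ 0) :
    ((c22 α β γ δ : ℂ) * z ^ 2 * w ^ 2 + (c20 α β γ δ : ℂ) * z ^ 2 +
        (c02 α β γ δ : ℂ) * w ^ 2 + 2 * (c11 α β γ δ : ℂ) * z * w + (c00 α β γ δ : ℂ) = 0) ↔
      ((c22 (π - α) (π - β) γ δ : ℂ) * (-z⁻¹) ^ 2 * w ^ 2 +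
        (c20 (π - α) (π - β) γ δ : ℂ) * (-z⁻¹) ^ 2 +
        (c02 (π - α) (π - β) γ δ : ℂ) * w ^ 2 +
        2 * (c11 (π - α) (π - β) γ δ : ℂ) * (-z⁻¹) * w +
        (c00 (π - α) (π - β) γ δ : ℂ) = 0) := by
  rw [c22_switch, c20_switch, c02_switch, c11_switch, c00_switch]
  push_cast
  have hz2 : -(z⁻¹) ^ 2 ≠ 0 := neg_ne_zero.mpr (pow_ne_zero 2 (inv_ne_zero hz))
  rw [← mul_eq_zero_iff_left hz2]
  refine Eq.congr_left ?_
  field_simp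
  ring
end

section
/- Let a, b, c, p, r be complex numbers with a ≠ 0, b ≠ 0, c ≠ 0, and suppose r² = −c/a and p·r = i·c/b (where i is the imaginary unit). Then the affine algebraic curve {(z,w) ∈ ℂ² : a·w² + 2b·z·w + c = 0} is exactly the set {(p·sin t, r·exp(i·t)) : t ∈ ℂ}, where sin and exp are the complex sine and exponential functions. In particular p² = a·c/b². -/
/-!
With `e = exp (i t)` one has `2 sin t = i (e⁻¹ - e)`, so substituting `(p sin t, r e)` into
`a w² + 2 b z w + c` gives `-c e² - c (1 - e²) + c = 0`. Conversely, a point `(z, w)` of the curve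
has `w ≠ 0` because `c ≠ 0`, hence `w = r exp (i t)` for some `t`; the equation is affine in `z`
with leading coefficient `2 b w ≠ 0`, so `z` is determined by `w` and must equal `p sin t`.
-/

theorem param_mem_curve {a b c p r : ℂ} (har : a * r ^ 2 = -c) (hbpr : b * (p * r) = Complex.I * c)
    (t : ℂ) :
    a * (r * Complex.exp (Complex.I * t)) ^ 2
      + 2 * b * (p * Complex.sin t) * (r * Complex.exp (Complex.I * t)) + c = 0 := by
  have hexp : Complex.exp (-t * Complex.I) * Complex.exp (Complex.I * t) = 1 := by
    rw [← Complex.exp_add, ← Complex.exp_zero]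
    congr 1
    ring
  rw [Complex.sin, mul_comm t Complex.I]
  linear_combination (Complex.exp (Complex.I * t)) ^ 2 * har
    + Complex.I * (1 - Complex.exp (Complex.I * t) ^ 2) * hbpr
    + b * p * r * Complex.I * hexp
    + c * (1 - Complex.exp (Complex.I * t) ^ 2) * Complex.I_sq

theorem deltoid_parametrization (a b c p r : ℂ)
    (ha : a ≠ 0) (hb : b ≠ 0) (hc : c ≠ 0)
    (hr : r ^ 2 = -c / a) (hpr : p * r = Complex.I * c / b) :
    ({zw : ℂ × ℂ | a * zw.2 ^ 2 + 2 * b * zw.1 * zw.2 + c = 0} =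
      {zw : ℂ × ℂ | ∃ t : ℂ, zw = (p * Complex.sin t, r * Complex.exp (Complex.I * t))}) ∧
    p ^ 2 = a * c / b ^ 2 := by
  have har : a * r ^ 2 = -c := by rw [hr]; field_simp
  have hbpr : b * (p * r) = Complex.I * c := by rw [hpr]; field_simp
  have hr0 : r ≠ 0 := by
    rintro rfl
    apply hc
    linear_combination har
  refine ⟨?_, ?_⟩
  · ext ⟨z, w⟩
    simp only [Set.mem_ofPred_eq, Prod.mk.injEq]
    constructor
    · intro h
      have hw : w ≠ 0 := by
        rintro rfl
        apply hc
        linear_combination h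
      have hwt : w = r * Complex.exp (Complex.I * (-Complex.I * Complex.log (w / r))) := by
        rw [← mul_assoc, mul_neg, Complex.I_mul_I, neg_neg, one_mul,
          Complex.exp_log (div_ne_zero hw hr0)]
        field_simp
      refine ⟨-Complex.I * Complex.log (w / r), ?_, hwt⟩
      have key := param_mem_curve har hbpr (-Complex.I * Complex.log (w / r))
      rw [← hwt] at key
      apply mul_left_cancel₀ (mul_ne_zero (mul_ne_zero two_ne_zero hb) hw)
      linear_combination h - key
    · rintro ⟨t, rfl, rfl⟩
      exact param_mem_curve har hbpr t
  · rw [eq_div_iff (pow_ne_zero 2 hb)]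
    -- Squaring `b p r = i c` gives `b² p² r² = -c²`, and `c = -a r²` lets one cancel `c`.
    apply mul_right_cancel₀ hc
    linear_combination (-a) * (b * (p * r) + Complex.I * c) * hbpr
      + p ^ 2 * b ^ 2 * har - a * c ^ 2 * Complex.I_sq
end

section
/- Let c₂₀, c₀₂, c₁₁, c₀₀ be complex numbers with c₂₀ ≠ 0, c₀₂ ≠ 0, c₀₀ ≠ 0, and Δ := c₁₁² − c₂₀·c₀₂ ≠ 0. Let p, q, t₀ be complex numbers satisfying p²·Δ = c₀₂·c₀₀, q²·Δ = c₂₀·c₀₀, and p·q·Δ·cos t₀ = −c₁₁·c₀₀. Then the affine algebraic curve {(z,w) ∈ ℂ² : c₂₀·z² + c₀₂·w² + 2c₁₁·z·w + c₀₀ = 0} equals the set {(p·sin t, q·sin(t+t₀)) : t ∈ ℂ}, where sin and cos are the complex sine and cosine. -/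
/-!
Put `z = p x`, `w = q y`. The relations on `p`, `q`, `t₀` turn the conic into
`x² + y² - 2 x y cos t₀ = sin² t₀`, that is `(y - x cos t₀)² = sin² t₀ (1 - x²)`
(`conic_normal_form`). Since the complex sine is surjective, `x = sin t` for some `t`, and then
`y = x cos t₀ ± cos t sin t₀`. The plus sign is `y = sin (t + t₀)`; the minus sign
becomes the plus sign on replacing `t` by `π - t`.
-/

/-- In the rescaled coordinates `z = p x`, `w = q y`, the conic has the equation
`(y - x cos t₀)² = sin² t₀ (1 - x²)`. -/
lemma conic_normal_form (c20 c02 c11 c00 p q t₀ x y : ℂ)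
    (h20 : c20 ≠ 0) (h02 : c02 ≠ 0) (h00 : c00 ≠ 0)
    (hΔ : c11 ^ 2 - c20 * c02 ≠ 0)
    (hp : p ^ 2 * (c11 ^ 2 - c20 * c02) = c02 * c00)
    (hq : q ^ 2 * (c11 ^ 2 - c20 * c02) = c20 * c00)
    (ht : p * q * (c11 ^ 2 - c20 * c02) * Complex.cos t₀ = -(c11 * c00)) :
    c20 * (p * x) ^ 2 + c02 * (q * y) ^ 2 + 2 * c11 * (p * x) * (q * y) + c00 = 0 ↔
      (y - x * Complex.cos t₀) ^ 2 = Complex.sin t₀ ^ 2 * (1 - x ^ 2) := by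
  have hcs := Complex.sin_sq_add_cos_sq t₀
  generalize Complex.cos t₀ = C at *
  generalize Complex.sin t₀ = S at *
  generalize hD : c11 ^ 2 - c20 * c02 = D at *
  have hpq : (p * q * D) ^ 2 = c20 * c02 * c00 ^ 2 := by
    linear_combination q ^ 2 * D * hp + c02 * c00 * hq
  have hC : c20 * c02 * C ^ 2 = c11 ^ 2 := by
    apply mul_left_cancel₀ (pow_ne_zero 2 h00)
    linear_combination -C ^ 2 * hpq + (p * q * D * C - c11 * c00) * ht
  have hS : c20 * c02 * S ^ 2 = -D := by
    linear_combination c20 * c02 * hcs - hC - hD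
  have hm : c11 * (p * q) * D = -(c20 * c02 * c00 * C) := by
    apply mul_left_cancel₀ h00
    linear_combination (p * q * D) * ht - C * hpq
  have key : (c20 * (p * x) ^ 2 + c02 * (q * y) ^ 2 + 2 * c11 * (p * x) * (q * y) + c00) * D =
      c20 * c02 * c00 * ((y - x * C) ^ 2 - S ^ 2 * (1 - x ^ 2)) := by
    linear_combination c20 * x ^ 2 * hp + c02 * y ^ 2 * hq + 2 * x * y * hm + c00 * hS
      - c20 * c02 * c00 * x ^ 2 * hcs
  have hk : c20 * c02 * c00 ≠ 0 := mul_ne_zero (mul_ne_zero h20 h02) h00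
  rw [← sub_eq_zero (b := S ^ 2 * (1 - x ^ 2)), ← mul_eq_zero_iff_right hΔ, key,
    mul_eq_zero_iff_left hk]

theorem conic_parametrization (c20 c02 c11 c00 p q t₀ : ℂ)
    (h20 : c20 ≠ 0) (h02 : c02 ≠ 0) (h00 : c00 ≠ 0)
    (hΔ : c11 ^ 2 - c20 * c02 ≠ 0)
    (hp : p ^ 2 * (c11 ^ 2 - c20 * c02) = c02 * c00)
    (hq : q ^ 2 * (c11 ^ 2 - c20 * c02) = c20 * c00)
    (ht : p * q * (c11 ^ 2 - c20 * c02) * Complex.cos t₀ = -(c11 * c00)) :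
    {zw : ℂ × ℂ | c20 * zw.1 ^ 2 + c02 * zw.2 ^ 2 + 2 * c11 * zw.1 * zw.2 + c00 = 0} =
      {zw : ℂ × ℂ | ∃ t : ℂ, zw = (p * Complex.sin t, q * Complex.sin (t + t₀))} := by
  have hp0 : p ≠ 0 := by
    rintro rfl
    exact mul_ne_zero h02 h00 (by simpa using hp.symm)
  have hq0 : q ≠ 0 := by
    rintro rfl
    exact mul_ne_zero h20 h00 (by simpa using hq.symm)
  have nf := fun x y => conic_normal_form c20 c02 c11 c00 p q t₀ x y h20 h02 h00 hΔ hp hq ht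
  ext ⟨z, w⟩
  simp only [Set.mem_ofPred_eq, Prod.mk.injEq]
  constructor
  · intro h
    obtain ⟨t, hx⟩ := Complex.sin_surjective (z / p)
    obtain rfl : z = p * Complex.sin t := by rw [hx]; field_simp
    obtain ⟨y, rfl⟩ : ∃ y, w = q * y := ⟨w / q, by field_simp⟩
    have hy : (y - Complex.sin t * Complex.cos t₀) ^ 2 =
        (Complex.cos t * Complex.sin t₀) ^ 2 := by
      rw [(nf _ _).1 h, ← Complex.cos_sq']
      ring
    rcases sq_eq_sq_iff_eq_or_eq_neg.1 hy with h1 | h1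
    · refine ⟨t, rfl, ?_⟩
      rw [Complex.sin_add]
      linear_combination q * h1
    · refine ⟨Real.pi - t, by rw [Complex.sin_pi_sub], ?_⟩
      rw [Complex.sin_add, Complex.sin_pi_sub, Complex.cos_pi_sub]
      linear_combination q * h1
  · rintro ⟨t, rfl, rfl⟩
    rw [nf, Complex.sin_add, ← Complex.cos_sq']
    ring
end

section
/- Let α, β, γ, δ be real numbers with α + γ = β + δ and sin α ≠ 0, sin β ≠ 0, sin γ ≠ 0, sin δ ≠ 0, sin(δ−α) ≠ 0, sin(δ−γ) ≠ 0, and sin(α+γ) ≠ 0. Let p, q, t₀ be complex numbers satisfying p² = sin α · sin δ/(sin β · sin γ) − 1, q² = sin γ · sin δ/(sin α · sin β) − 1, and p·q·sin β·cos t₀ = sin(α+γ). Then the affine algebraic curve {(z,w) ∈ ℂ² : sin γ · sin(δ−α) · z² + sin α · sin(δ−γ) · w² − 2 sin α · sin γ · z·w + sin(α+γ) · sin δ = 0} equals the set {(p·sin t, q·sin(t+t₀)) : t ∈ ℂ}. -/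
open Real

/-!
Write `σ = α + γ`. Three product-to-sum identities give
`p² = sin σ sin (δ - γ) / (sin β sin γ)`, `q² = sin σ sin (δ - α) / (sin α sin β)` and
`cos² t₀ = sin α sin γ / (sin (δ - α) sin (δ - γ))`. Hence, after the substitution
`z = p X`, `w = q Y`, the equation of the curve becomes a nonzero multiple of
`X² + Y² - 2 X Y cos t₀ = sin² t₀` (`curve_eq_mul_ellipse`). This is the complex ellipse
parametrized by `X = sin t`, `Y = sin (t + t₀)` (`ellipse_iff_exists_sin`): completing the square
gives `(Y - X cos t₀)² = sin² t₀ (1 - X²)`, so that a preimage `t` of `X` under the surjective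
complex sine satisfies `Y = X cos t₀ ± cos t sin t₀`, and the sign is absorbed by `t ↦ π - t`.
-/

/-- Stated with `a + c - d` in place of `β`, so that `α` and `γ` may be interchanged. -/
lemma sin_mul_sin_sub_sin_mul_sin (a c d : ℝ) :
    sin a * sin d - sin (a + c - d) * sin c = sin (a + c) * sin (d - c) := by
  simp only [sin_sub, sin_add, cos_add]
  linear_combination (-sin a * sin d) * sin_sq_add_cos_sq c

lemma sin_mul_sin_eq_sub (a c d : ℝ) :
    sin (a + c - d) * sin d = sin a * sin c - sin (d - a) * sin (d - c) := by
  simp only [sin_sub, sin_add, cos_add]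
  linear_combination (sin a * sin c) * sin_sq_add_cos_sq d

lemma ellipse_iff_exists_sin (X Y t₀ : ℂ) :
    X ^ 2 + Y ^ 2 - 2 * X * Y * Complex.cos t₀ = Complex.sin t₀ ^ 2 ↔
      ∃ t, X = Complex.sin t ∧ Y = Complex.sin (t + t₀) := by
  have h₀ := Complex.sin_sq_add_cos_sq t₀
  constructor
  · intro hXY
    obtain ⟨t, rfl⟩ := Complex.sin_surjective X
    have h₁ := Complex.sin_sq_add_cos_sq t
    have hsq : (Y - Complex.sin t * Complex.cos t₀) ^ 2 =
        (Complex.cos t * Complex.sin t₀) ^ 2 := by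
      linear_combination hXY + Complex.sin t ^ 2 * h₀ - Complex.sin t₀ ^ 2 * h₁
    rcases sq_eq_sq_iff_eq_or_eq_neg.mp hsq with hY | hY
    · refine ⟨t, rfl, ?_⟩
      rw [Complex.sin_add]
      linear_combination hY
    · refine ⟨π - t, (Complex.sin_pi_sub t).symm, ?_⟩
      rw [Complex.sin_add, Complex.sin_pi_sub, Complex.cos_pi_sub]
      linear_combination hY
  · rintro ⟨t, rfl, rfl⟩
    have h₁ := Complex.sin_sq_add_cos_sq t
    rw [Complex.sin_add]
    linear_combination (-Complex.sin t ^ 2) * h₀ + Complex.sin t₀ ^ 2 * h₁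

/-- The rescaling of the conic, as an algebraic identity. Here `a, b, c, d` are the sines of the
sides, `A = sin (δ - α)`, `B = sin (δ - γ)`, `S = sin σ`, `s = sin t₀`, `k = cos t₀`. -/
lemma curve_eq_mul_ellipse {a b c d A B S p q s k : ℂ}
    (hb : b ≠ 0) (hS : S ≠ 0)
    (hbd : b * d = a * c - A * B) (hp : p ^ 2 * (b * c) = S * B) (hq : q ^ 2 * (a * b) = S * A)
    (ht : p * q * b * k = S) (hs : s ^ 2 + k ^ 2 = 1) (X Y : ℂ) :
    c * A * (p * X) ^ 2 + a * B * (q * Y) ^ 2 - 2 * a * c * (p * X) * (q * Y) + S * d =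
      S * A * B / b * (X ^ 2 + Y ^ 2 - 2 * X * Y * k - s ^ 2) := by
  -- `cos² t₀ = ac / (AB)`, from squaring `p q b cos t₀ = S`
  have hk : A * B * k ^ 2 = a * c := by
    apply mul_left_cancel₀ (pow_ne_zero 2 hS)
    calc S ^ 2 * (A * B * k ^ 2) = (S * A) * (S * B) * k ^ 2 := by ring
      _ = a * c * (p * q * b * k) ^ 2 := by rw [← hp, ← hq]; ring
      _ = S ^ 2 * (a * c) := by rw [ht]; ring
  -- the coefficient of the mixed term
  have hpq : a * c * (p * q) * b = S * A * B * k := by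
    linear_combination (-(p * q * b)) * hk + A * B * k * ht
  rw [div_mul_eq_mul_div, eq_div_iff hb]
  linear_combination A * X ^ 2 * hp + B * Y ^ 2 * hq - 2 * X * Y * hpq + S * hbd
    + S * A * B * hs - S * hk

theorem conic_configuration_parametrization (α β γ δ : ℝ) (p q t₀ : ℂ)
    (h : α + γ = β + δ)
    (hα : sin α ≠ 0) (hβ : sin β ≠ 0) (hγ : sin γ ≠ 0) (hδ : sin δ ≠ 0)
    (hδα : sin (δ - α) ≠ 0) (hδγ : sin (δ - γ) ≠ 0) (hσ : sin (α + γ) ≠ 0)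
    (hp : p ^ 2 = (sin α : ℂ) * (sin δ : ℂ) / ((sin β : ℂ) * (sin γ : ℂ)) - 1)
    (hq : q ^ 2 = (sin γ : ℂ) * (sin δ : ℂ) / ((sin α : ℂ) * (sin β : ℂ)) - 1)
    (ht : p * q * (sin β : ℂ) * Complex.cos t₀ = (sin (α + γ) : ℂ)) :
    {zw : ℂ × ℂ |
        (sin γ : ℂ) * (sin (δ - α) : ℂ) * zw.1 ^ 2 +
          (sin α : ℂ) * (sin (δ - γ) : ℂ) * zw.2 ^ 2 -
          2 * (sin α : ℂ) * (sin γ : ℂ) * zw.1 * zw.2 +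
          (sin (α + γ) : ℂ) * (sin δ : ℂ) = 0} =
      {zw : ℂ × ℂ | ∃ t : ℂ, zw = (p * Complex.sin t, q * Complex.sin (t + t₀))} := by
  obtain rfl : β = α + γ - δ := by linarith
  have e₁ := congrArg (Complex.ofReal) (sin_mul_sin_sub_sin_mul_sin α γ δ)
  have e₂ := congrArg (Complex.ofReal) (sin_mul_sin_sub_sin_mul_sin γ α δ)
  have e₃ := congrArg (Complex.ofReal) (sin_mul_sin_eq_sub α γ δ)
  rw [add_comm γ α] at e₂
  simp only [Complex.ofReal_mul, Complex.ofReal_sub] at e₁ e₂ e₃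
  rw [← Complex.ofReal_ne_zero] at hα hβ hγ hδα hδγ hσ
  have hp' : p ^ 2 * ((sin (α + γ - δ) : ℂ) * (sin γ : ℂ)) =
      (sin (α + γ) : ℂ) * (sin (δ - γ) : ℂ) := by
    rw [hp, sub_mul, div_mul_cancel₀ _ (mul_ne_zero hβ hγ)]
    linear_combination e₁
  have hq' : q ^ 2 * ((sin α : ℂ) * (sin (α + γ - δ) : ℂ)) =
      (sin (α + γ) : ℂ) * (sin (δ - α) : ℂ) := by
    rw [hq, sub_mul, div_mul_cancel₀ _ (mul_ne_zero hα hβ)]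
    linear_combination e₂
  have hp0 : p ≠ 0 := by
    rintro rfl
    exact hσ (by rw [← ht]; ring)
  have hq0 : q ≠ 0 := by
    rintro rfl
    exact hσ (by rw [← ht]; ring)
  have key := curve_eq_mul_ellipse hβ hσ e₃ hp' hq' ht (Complex.sin_sq_add_cos_sq t₀)
  ext ⟨z, w⟩
  obtain ⟨X, rfl⟩ : ∃ X, z = p * X := ⟨z / p, (mul_div_cancel₀ z hp0).symm⟩
  obtain ⟨Y, rfl⟩ : ∃ Y, w = q * Y := ⟨w / q, (mul_div_cancel₀ w hq0).symm⟩
  simp only [Set.mem_ofPred_eq, Prod.mk.injEq, mul_right_inj' hp0, mul_right_inj' hq0]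
  rw [key, ← ellipse_iff_exists_sin, mul_eq_zero, sub_eq_zero]
  exact or_iff_right (div_ne_zero (mul_ne_zero (mul_ne_zero hσ hδα) hδγ) hβ)
end

section
/- For all real numbers α, β, γ, δ, with σ = (α+β+γ+δ)/2 and ᾱ = σ−α, β̄ = σ−β, γ̄ = σ−γ, δ̄ = σ−δ, the identity sin ᾱ · sin γ̄ − sin β̄ · sin δ̄ = cos α · cos γ − cos β · cos δ holds. In particular, cos α · cos γ = cos β · cos δ if and only if sin ᾱ · sin γ̄ = sin β̄ · sin δ̄. -/
open Real

theorem orthodiagonal_equiv (α β γ δ σ αb βb γb δb : ℝ)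
    (hσ : σ = (α + β + γ + δ) / 2)
    (hα : αb = σ - α) (hβ : βb = σ - β) (hγ : γb = σ - γ) (hδ : δb = σ - δ) :
    sin αb * sin γb - sin βb * sin δb = cos α * cos γ - cos β * cos δ ∧
    (cos α * cos γ = cos β * cos δ ↔ sin αb * sin γb = sin βb * sin δb) := by
  -- Product-to-sum: `ᾱ + γ̄ = β + δ`, `ᾱ - γ̄ = γ - α`, and symmetrically for `β̄`, `δ̄`.
  have h₁ : cos (αb + γb) = cos (β + δ) := by congr 1; linarith
  have h₂ : cos (αb - γb) = cos (γ - α) := by congr 1; linarith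
  have h₃ : cos (βb + δb) = cos (α + γ) := by congr 1; linarith
  have h₄ : cos (βb - δb) = cos (δ - β) := by congr 1; linarith
  rw [cos_add, cos_add] at h₁ h₃
  rw [cos_sub, cos_sub] at h₂ h₄
  have key : sin αb * sin γb - sin βb * sin δb = cos α * cos γ - cos β * cos δ := by
    linarith
  exact ⟨key, fun h => by linarith, fun h => by linarith⟩
end

section
/- Let α, β, γ, δ be real numbers with cos α · cos γ = cos β · cos δ, and set σ = (α+β+γ+δ)/2, ᾱ = σ−α, β̄ = σ−β, γ̄ = σ−γ, δ̄ = σ−δ. Then the following four identities hold: (i) sin(δ−α)·sin(δ−γ) = 2 cos δ · sin δ̄ · sin(σ−β−δ); (ii) sin(δ−α)·sin(δ+γ) = 2 cos δ · sin ᾱ · sin(σ−β−α); (iii) sin(δ+α)·sin(δ−γ) = 2 cos δ · sin γ̄ · sin(σ−β−γ); (iv) sin(δ+α)·sin(δ+γ) = 2 cos δ · sin β̄ · sin σ. -/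
/-!
By product-to-sum, `2 sin x sin y = cos (x - y) - cos (x + y)`. In each of the four right-hand
sides the two sine arguments differ by `β` and add up to `±(±α ± γ + δ)`, so after
multiplying by `cos δ` the term `cos β cos δ` can be replaced by `cos α cos γ`. What remains is the
unconditional identity `cos a cos c - cos d cos (a + c + d) = sin (d + a) sin (d + c)` with
`a = ±α`, `c = ±γ`, `d = δ`.
-/

open Real

/-- The common form of the four identities, with `a = ±α` and `c = ±γ`. -/
lemma sin_add_mul_sin_add_of_orthodiagonal {a b c d x y : ℝ}
    (h : cos a * cos c = cos b * cos d)
    (hsub : x - y = b) (hadd : cos (x + y) = cos (a + c + d)) :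
    sin (d + a) * sin (d + c) = 2 * cos d * sin x * sin y := by
  have hprod : 2 * sin x * sin y = cos b - cos (a + c + d) := by
    rw [← hadd, ← hsub, cos_sub, cos_add]
    ring
  have key : cos a * cos c - cos d * cos (a + c + d) = sin (d + a) * sin (d + c) := by
    simp only [cos_add, sin_add]
    linear_combination (-(cos a * cos c)) * sin_sq_add_cos_sq d
  linear_combination -key + h - cos d * hprod

theorem orthodiagonal_identities (α β γ δ σ αb βb γb δb : ℝ)
    (h : cos α * cos γ = cos β * cos δ)
    (hσ : σ = (α + β + γ + δ) / 2)
    (hα : αb = σ - α) (hβ : βb = σ - β) (hγ : γb = σ - γ) (hδ : δb = σ - δ) :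
    sin (δ - α) * sin (δ - γ) = 2 * cos δ * sin δb * sin (σ - β - δ) ∧
    sin (δ - α) * sin (δ + γ) = 2 * cos δ * sin αb * sin (σ - β - α) ∧
    sin (δ + α) * sin (δ - γ) = 2 * cos δ * sin γb * sin (σ - β - γ) ∧
    sin (δ + α) * sin (δ + γ) = 2 * cos δ * sin βb * sin σ := by
  subst hα hβ hγ hδ hσ
  refine ⟨?_, ?_, ?_, ?_⟩
  · rw [sub_eq_add_neg δ α, sub_eq_add_neg δ γ]
    refine sin_add_mul_sin_add_of_orthodiagonal (b := β) (by simpa using h) (by ring) ?_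
    -- here the two arguments add up to `α + γ - δ`, the negative of `a + c + d`
    rw [← cos_neg]
    congr 1
    ring
  · rw [sub_eq_add_neg δ α]
    exact sin_add_mul_sin_add_of_orthodiagonal (b := β) (by simpa using h) (by ring)
      (by congr 1; ring)
  · rw [sub_eq_add_neg δ γ]
    exact sin_add_mul_sin_add_of_orthodiagonal (b := β) (by simpa using h) (by ring)
      (by congr 1; ring)
  · -- `β̄ - σ = -β`, so `cos (-β)` takes the place of `cos β`
    exact sin_add_mul_sin_add_of_orthodiagonal (b := -β) (by simpa using h) (by ring)
      (by congr 1; ring)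
end

section
/- Let α, β, γ, δ be real numbers with cos α · cos γ = cos β · cos δ and cos δ ≠ 0. Let z and w be nonzero complex numbers. Then c₂₂ z²w² + c₂₀ z² + c₀₂ w² + 2c₁₁ zw + c₀₀ = 0 holds — where c₂₂ = sin δ̄ · sin(σ−β−δ), c₂₀ = sin ᾱ · sin(σ−β−α), c₀₂ = sin γ̄ · sin(σ−β−γ), c₁₁ = −sin α · sin γ, c₀₀ = sin β̄ · sin σ, with σ = (α+β+γ+δ)/2 and ᾱ = σ−α, β̄ = σ−β, γ̄ = σ−γ, δ̄ = σ−δ — if and only if (sin(δ−α)·z + sin(δ+α)/z)·(sin(δ−γ)·w + sin(δ+γ)/w) = 4 sin α · sin γ · cos δ. -/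
/-!
Multiplying the polynomial equation by `2 cos δ ≠ 0` turns it into the product equation multiplied
by `z w`. Indeed each of `c₂₂, c₂₀, c₀₂, c₀₀` is a product `sin A * sin B` with `A - B = ± β` and
`A + B = ± (δ ± α ± γ)`; product-to-sum formulas and `cos α cos γ = cos β cos δ` then show that
`2 cos δ * c` is the corresponding product of `sin (δ ∓ α)` and `sin (δ ∓ γ)`
(`two_cos_mul_sin_mul_sin`, applied to `± α`, `± γ`).
-/

open Real

/-- The factorization of a single coefficient under the orthodiagonality condition. -/
lemma two_cos_mul_sin_mul_sin {a b c d A B : ℝ} (h : cos a * cos c = cos b * cos d)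
    (hsub : A - B = b) (hadd : A + B = a + c - d) :
    2 * cos d * (sin A * sin B) = sin (d - a) * sin (d - c) := by
  have h1 : 2 * (sin A * sin B) = cos b - cos (a + c - d) := by
    rw [← hsub, ← hadd, cos_sub, cos_add]; ring
  have h2 : 2 * cos d * (sin A * sin B) = cos a * cos c - cos d * cos (a + c - d) := by
    linear_combination cos d * h1 - h
  rw [h2, cos_sub, cos_add, sin_add, sin_sub, sin_sub]
  linear_combination (-(cos a * cos c)) * sin_sq_add_cos_sq d

theorem orthodiagonal_configuration (α β γ δ σ αb βb γb δb : ℝ)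
    (h : cos α * cos γ = cos β * cos δ) (hδπ : cos δ ≠ 0)
    (hσ : σ = (α + β + γ + δ) / 2)
    (hα : αb = σ - α) (hβ : βb = σ - β) (hγ : γb = σ - γ) (hδ : δb = σ - δ)
    (z w : ℂ) (hz : z ≠ 0) (hw : w ≠ 0) :
    ((sin δb * sin (σ - β - δ) : ℝ) * z ^ 2 * w ^ 2 +
        (sin αb * sin (σ - β - α) : ℝ) * z ^ 2 +
        (sin γb * sin (σ - β - γ) : ℝ) * w ^ 2 +
        2 * (-(sin α * sin γ) : ℝ) * z * w +
        (sin βb * sin σ : ℝ) = 0) ↔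
      ((sin (δ - α) : ℝ) * z + (sin (δ + α) : ℝ) / z) *
          ((sin (δ - γ) : ℝ) * w + (sin (δ + γ) : ℝ) / w) =
        (4 * (sin α * sin γ * cos δ) : ℝ) := by
  have h22 : 2 * cos δ * (sin δb * sin (σ - β - δ)) = sin (δ - α) * sin (δ - γ) :=
    two_cos_mul_sin_mul_sin h (by subst_vars; ring) (by subst_vars; ring)
  have h20 : 2 * cos δ * (sin αb * sin (σ - β - α)) = sin (δ - α) * sin (δ + γ) := by
    have := two_cos_mul_sin_mul_sin (a := α) (b := β) (c := -γ) (d := δ)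
      (A := -(σ - β - α)) (B := -αb) (by rwa [cos_neg])
      (by subst_vars; ring) (by subst_vars; ring)
    rw [sin_neg, sin_neg, sub_neg_eq_add] at this
    linear_combination this
  have h02 : 2 * cos δ * (sin γb * sin (σ - β - γ)) = sin (δ + α) * sin (δ - γ) := by
    have := two_cos_mul_sin_mul_sin (a := -α) (b := β) (c := γ) (d := δ)
      (A := -(σ - β - γ)) (B := -γb) (by rwa [cos_neg])
      (by subst_vars; ring) (by subst_vars; ring)
    rw [sin_neg, sin_neg, sub_neg_eq_add] at this
    linear_combination this
  have h00 : 2 * cos δ * (sin βb * sin σ) = sin (δ + α) * sin (δ + γ) := by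
    have := two_cos_mul_sin_mul_sin (a := -α) (b := β) (c := -γ) (d := δ)
      (A := -βb) (B := -σ) (by rwa [cos_neg, cos_neg])
      (by subst_vars; ring) (by subst_vars; ring)
    rw [sin_neg, sin_neg, sub_neg_eq_add, sub_neg_eq_add] at this
    linear_combination this
  have hc : (2 * (cos δ : ℝ) : ℂ) ≠ 0 :=
    mul_ne_zero two_ne_zero (Complex.ofReal_ne_zero.mpr hδπ)
  -- The coefficients become arbitrary real constants, so that only polynomial algebra remains.
  generalize sin δb * sin (σ - β - δ) = c22 at *
  generalize sin αb * sin (σ - β - α) = c20 at *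
  generalize sin γb * sin (σ - β - γ) = c02 at *
  generalize sin βb * sin σ = c00 at *
  generalize sin (δ - α) = p at *
  generalize sin (δ + α) = q at *
  generalize sin (δ - γ) = r at *
  generalize sin (δ + γ) = s at *
  have k22 := congrArg Complex.ofReal h22
  have k20 := congrArg Complex.ofReal h20
  have k02 := congrArg Complex.ofReal h02
  have k00 := congrArg Complex.ofReal h00
  simp only [Complex.ofReal_mul, Complex.ofReal_neg, Complex.ofReal_ofNat] at k22 k20 k02 k00 ⊢
  have hprod : ((p : ℂ) * z + q / z) * (r * w + s / w) * (z * w)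
      = (p * z ^ 2 + q) * (r * w ^ 2 + s) := by
    field_simp
  constructor <;> intro H
  · apply mul_right_cancel₀ (mul_ne_zero hz hw)
    linear_combination hprod + 2 * (cos δ : ℂ) * H
      - (z ^ 2 * w ^ 2 * k22 + z ^ 2 * k20 + w ^ 2 * k02 + k00)
  · apply mul_left_cancel₀ hc
    linear_combination z * w * H - hprod
      + (z ^ 2 * w ^ 2 * k22 + z ^ 2 * k20 + w ^ 2 * k02 + k00)
end

section
/- Let a, b, c, d be complex numbers and let t be a complex number with sin t ≠ 0. Set w₁ = a·sin t + b·cos t and w₂ = (c + d·cos t)/sin t. Then (d·w₁ + b·c)² + (w₁·w₂ − a·c)² = (b·w₂ + a·d)². Equivalently, w₁²w₂² + d²w₁² − b²w₂² − 2ac·w₁w₂ + 2bcd·w₁ − 2abd·w₂ + (a²c² + b²c² − a²d²) = 0. -/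
/-!
Write `w₁ = a sin t + b cos t` and let `w₂` satisfy `w₂ sin t = c + d cos t`. Then
`d w₁ + b c = sin t * (b w₂ + a d)` and `w₁ w₂ - a c = cos t * (b w₂ + a d)`, so the first
identity is `sin² t + cos² t = 1` multiplied by `(b w₂ + a d)²`; the second is its expansion.
-/

theorem conic_skew_elimination (a b c d t : ℂ) (ht : Complex.sin t ≠ 0) :
    ((d * (a * Complex.sin t + b * Complex.cos t) + b * c) ^ 2 +
        ((a * Complex.sin t + b * Complex.cos t) *
            ((c + d * Complex.cos t) / Complex.sin t) - a * c) ^ 2 =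
      (b * ((c + d * Complex.cos t) / Complex.sin t) + a * d) ^ 2) ∧
    ((a * Complex.sin t + b * Complex.cos t) ^ 2 *
          ((c + d * Complex.cos t) / Complex.sin t) ^ 2 +
        d ^ 2 * (a * Complex.sin t + b * Complex.cos t) ^ 2 -
        b ^ 2 * ((c + d * Complex.cos t) / Complex.sin t) ^ 2 -
        2 * a * c * (a * Complex.sin t + b * Complex.cos t) *
          ((c + d * Complex.cos t) / Complex.sin t) +
        2 * b * c * d * (a * Complex.sin t + b * Complex.cos t) -
        2 * a * b * d * ((c + d * Complex.cos t) / Complex.sin t) +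
        (a ^ 2 * c ^ 2 + b ^ 2 * c ^ 2 - a ^ 2 * d ^ 2) = 0) := by
  have hsc := Complex.sin_sq_add_cos_sq t
  obtain ⟨w, hw⟩ : ∃ w, w = (c + d * Complex.cos t) / Complex.sin t := ⟨_, rfl⟩
  have hsw : w * Complex.sin t = c + d * Complex.cos t := by
    rw [hw, div_mul_cancel₀ _ ht]
  rw [← hw]
  generalize Complex.sin t = S at *
  generalize Complex.cos t = C at *
  have h1 : d * (a * S + b * C) + b * c = S * (b * w + a * d) := by
    linear_combination (-b) * hsw
  have h2 : (a * S + b * C) * w - a * c = C * (b * w + a * d) := by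
    linear_combination a * hsw
  have key : (d * (a * S + b * C) + b * c) ^ 2 + ((a * S + b * C) * w - a * c) ^ 2 =
      (b * w + a * d) ^ 2 := by
    rw [h1, h2]
    linear_combination (b * w + a * d) ^ 2 * hsc
  exact ⟨key, by linear_combination key⟩
end
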